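/- Let P be the heap of a word s₁s₂⋯s_q in the free monoid on the generating set S of a Coxeter group W. Then P is the heap of a fully commutative element of W if and only if (1) there is no covering relation i ≺ j in P with sᵢ = sⱼ, and (2) there is no convex chain i₁ < i₂ < ⋯ < i_m in P with alternating labels s,t,s,t,... where m = m(s,t) ≥ 3. -/

import Mathlib

open CoxeterSystem

def CommStep {B : Type*} (M : CoxeterMatrix B) (l l' : List B) : Prop :=
  ∃ (u v : List B) (a b : B), M a b = 2 ∧ l = u ++ a :: b :: v ∧ l' = u ++ b :: a :: v

def CommEquiv {B : Type*} (M : CoxeterMatrix B) : List B → List B → Prop :=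
  Relation.ReflTransGen fun l l' => CommStep M l l' ∨ CommStep M l' l

def FullyCommutative {B W : Type*} [Group W] {M : CoxeterMatrix B}
    (cs : CoxeterSystem M W) (w : W) : Prop :=
  ∀ l l', cs.IsReduced l → cs.wordProd l = w → cs.IsReduced l' → cs.wordProd l' = w →
    CommEquiv M l l'

def heapLe {B : Type*} (M : CoxeterMatrix B) (ω : List B) :
    Fin ω.length → Fin ω.length → Prop :=
  Relation.ReflTransGen fun i j => (i : ℕ) < (j : ℕ) ∧ M (ω.get i) (ω.get j) ≠ 2

def heapLt {B : Type*} (M : CoxeterMatrix B) (ω : List B) (i j : Fin ω.length) : Prop :=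
  heapLe M ω i j ∧ i ≠ j

/-- `j` covers `i` in the heap of `ω`. -/
def HeapCovers {B : Type*} (M : CoxeterMatrix B) (ω : List B) (i j : Fin ω.length) : Prop :=
  heapLt M ω i j ∧ ∀ k, heapLt M ω i k → heapLt M ω k j → False

/-!
In the geometric representation the order of `s i * s j` is read off from the recurrence
`u (n + 2) = 2 cos (π / M i j) u (n + 1) - u n`, so no smaller power of `s i * s j` than the
`M i j`-th is trivial. The signed conjugation action of the group on `W × ZMod 2` shows that the
parity with which a reflection occurs in the inversion sequence of a word depends only on the group
element. This gives the exchange property and Matsumoto's theorem: two reduced words of the same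
element are connected by braid moves.

The words in the commutation class of `ω` come from linear extensions of its heap, and the factors
`l` of such words whose consecutive letters do not commute are exactly the label sequences of convex
chains. The two conditions on the heap thus say that no word in the commutation class contains a
factor `a a` or a long braid `a b a ⋯`. Such a class admits no braid move other than commutations,
so by Matsumoto's theorem it contains all reduced words of its element as soon as `ω` is reduced;
and a letter whose addition does not increase the length could be commuted next to an equal one,
so `ω` is reduced. Conversely, a factor `a a` is not reduced, and replacing a long braid leaves the
commutation class, because it changes the subword in the two letters involved.
-/

section Reflections

open Module

section CommRing

variable {R V : Type*} [CommRing R] [AddCommGroup V] [Module R V] {f g : Dual R V} {x y : V}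

theorem reflection_mul_reflection_pow_apply_of_recurrence (hf : f x = 2) (hg : g y = 2) {t : R}
    (hfy : f y = -t) (hgx : g x = -t) {u : ℕ → R} (hu : ∀ n, u (n + 2) = t * u (n + 1) - u n)
    (k : ℕ) :
    ((reflection hf * reflection hg) ^ k) (u 1 • x + u 0 • y) =
      u (2 * k + 1) • x + u (2 * k) • y := by
  induction k with
  | zero => simp
  | succ k ih =>
    rw [pow_succ', LinearEquiv.mul_apply, ih, LinearEquiv.mul_apply]
    simp only [reflection_apply, map_add, map_sub, map_smul, hf, hg, hfy, hgx,
      mul_add, mul_one, hu]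
    module

end CommRing

section Field

variable {K V : Type*} [Field K] [AddCommGroup V] [Module K V] {f g : Dual K V} {x y : V}

theorem exists_add_eq_of_sq_ne_four (hf : f x = 2) (hg : g y = 2) {t : K} (hfy : f y = -t)
    (hgx : g x = -t) (ht : t ^ 2 ≠ 4) (v : V) :
    ∃ (a b : K) (z : V), f z = 0 ∧ g z = 0 ∧ a • x + b • y + z = v := by
  have h_det : 4 - t ^ 2 ≠ 0 := sub_ne_zero.mpr ht.symm
  refine ⟨(2 * f v + t * g v) / (4 - t ^ 2), (t * f v + 2 * g v) / (4 - t ^ 2), _, ?_, ?_,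
    add_sub_cancel _ v⟩
  all_goals
    simp only [map_sub, map_add, map_smul, hf, hg, hfy, hgx, smul_eq_mul]
    field_simp
    ring

theorem reflection_mul_reflection_pow_eq_one (hf : f x = 2) (hg : g y = 2) {t : K} (hfy : f y = -t)
    (hgx : g x = -t) (ht : t ^ 2 ≠ 4) {m : ℕ}
    (h_plane : ∀ a b : K, ((reflection hf * reflection hg) ^ m) (a • x + b • y) = a • x + b • y) :
    (reflection hf * reflection hg) ^ m = 1 := by
  ext v
  obtain ⟨a, b, z, hfz, hgz, rfl⟩ := exists_add_eq_of_sq_ne_four hf hg hfy hgx ht v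
  have hz : (reflection hf * reflection hg) z = z := by simp [reflection_apply, hfz, hgz]
  have hz_pow : ((reflection hf * reflection hg) ^ m) z = z := by
    rw [LinearEquiv.pow_apply]
    exact Function.iterate_fixed hz m
  rw [map_add, h_plane, hz_pow, LinearEquiv.coe_one, id]

end Field

end Reflections

section GeometricRepresentation

variable {B : Type*} (M : CoxeterMatrix B)

/-- Twice the pairing with the simple root `α i` in the geometric representation of the Coxeter
group of `M`, where `⟨α i, α j⟩ = -cos (π / M i j)`. An infinite bond is encoded by `M i j = 0`;
there the junk value `π / 0 = 0` gives the right pairing `-1`. -/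
noncomputable def simpleCoroot (i : B) : Module.Dual ℝ (B →₀ ℝ) :=
  Finsupp.linearCombination ℝ fun j => -(2 * Real.cos (Real.pi / M i j))

theorem simpleCoroot_single (i j : B) :
    simpleCoroot M i (Finsupp.single j 1) = -(2 * Real.cos (Real.pi / M i j)) := by
  simp [simpleCoroot]

theorem simpleCoroot_single_self (i : B) : simpleCoroot M i (Finsupp.single i 1) = 2 := by
  simp [simpleCoroot_single]

/-- The simple reflection `v ↦ v - 2 ⟨α i, v⟩ α i` of the geometric representation. -/
noncomputable def simpleReflection (i : B) : (B →₀ ℝ) ≃ₗ[ℝ] (B →₀ ℝ) :=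
  Module.reflection (simpleCoroot_single_self M i)

theorem simpleReflection_mul_pow_apply {i j : B} {u : ℕ → ℝ}
    (hu : ∀ n, u (n + 2) = 2 * Real.cos (Real.pi / M i j) * u (n + 1) - u n) (k : ℕ) :
    ((simpleReflection M i * simpleReflection M j) ^ k)
        (u 1 • Finsupp.single i 1 + u 0 • Finsupp.single j 1) =
      u (2 * k + 1) • Finsupp.single i 1 + u (2 * k) • Finsupp.single j 1 :=
  reflection_mul_reflection_pow_apply_of_recurrence _ _ (simpleCoroot_single M i j)
    (by rw [simpleCoroot_single, M.symmetric]) hu k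

theorem sin_pi_div_natCast_pos {m : ℕ} (hm : 2 ≤ m) : 0 < Real.sin (Real.pi / m) :=
  Real.sin_pos_of_pos_of_lt_pi (by positivity)
    (div_lt_self Real.pi_pos (by exact_mod_cast hm))

theorem cos_add_two_mul (φ θ : ℝ) :
    Real.cos (φ + 2 * θ) = 2 * Real.cos θ * Real.cos (φ + θ) - Real.cos φ := by
  have h := Real.cos_add_cos (φ + 2 * θ) φ
  rw [show (φ + 2 * θ + φ) / 2 = φ + θ by ring, show (φ + 2 * θ - φ) / 2 = θ by ring] at h
  linear_combination h

theorem sin_add_two_mul (φ θ : ℝ) :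
    Real.sin (φ + 2 * θ) = 2 * Real.cos θ * Real.sin (φ + θ) - Real.sin φ := by
  have h := cos_add_two_mul (φ - Real.pi / 2) θ
  simpa [sub_add_eq_add_sub, Real.cos_sub_pi_div_two] using h

theorem simpleReflection_mul_pow_apply_plane {i j : B} (hM : 2 ≤ M i j) (a b : ℝ) :
    ((simpleReflection M i * simpleReflection M j) ^ M i j)
        (a • Finsupp.single i 1 + b • Finsupp.single j 1) =
      a • Finsupp.single i 1 + b • Finsupp.single j 1 := by
  set θ := Real.pi / M i j with hθ
  have h_sin : Real.sin θ ≠ 0 := (sin_pi_div_natCast_pos hM).ne'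
  let u (n : ℕ) : ℝ := b * Real.cos (n * θ) + (a - b * Real.cos θ) / Real.sin θ * Real.sin (n * θ)
  have h_rec (n : ℕ) : u (n + 2) = 2 * Real.cos θ * u (n + 1) - u n := by
    simp only [u]
    push_cast
    rw [add_mul, add_mul, one_mul, cos_add_two_mul, sin_add_two_mul]
    ring
  have h_period (n : ℕ) : u (2 * M i j + n) = u n := by
    have h_angle : ((2 * M i j + n : ℕ) : ℝ) * θ = n * θ + 2 * Real.pi := by
      rw [hθ]
      push_cast
      field_simp
      ring
    simp only [u, h_angle, Real.cos_add_two_pi, Real.sin_add_two_pi]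
  have h_zero : u 0 = b := by simp [u]
  have h_one : u 1 = a := by simp [u, h_sin]
  have h := simpleReflection_mul_pow_apply M h_rec (M i j)
  rwa [h_period 1, ← add_zero (2 * _), h_period 0, h_zero, h_one] at h

theorem isLiftable_simpleReflection : M.IsLiftable (simpleReflection M) := by
  intro i j
  obtain hM | hM | hM : M i j = 0 ∨ M i j = 1 ∨ 2 ≤ M i j := by lia
  · rw [hM, pow_zero]
  · obtain rfl : i = j := by
      by_contra hij
      exact M.off_diagonal i j hij hM
    ext1 v
    rw [hM, pow_one, LinearEquiv.mul_apply]
    exact Module.involutive_reflection _ v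
  · refine reflection_mul_reflection_pow_eq_one _ _ (simpleCoroot_single M i j)
      (by rw [simpleCoroot_single, M.symmetric]) (fun ht => ?_)
      (simpleReflection_mul_pow_apply_plane M hM)
    have h_sin := sin_pi_div_natCast_pos hM
    nlinarith [Real.sin_sq_add_cos_sq (Real.pi / M i j)]

theorem apply_two_mul_eq_of_simpleReflection_mul_pow_eq_one {i j : B} (hij : i ≠ j) {k : ℕ}
    (hk : (simpleReflection M i * simpleReflection M j) ^ k = 1) {u : ℕ → ℝ}
    (hu : ∀ n, u (n + 2) = 2 * Real.cos (Real.pi / M i j) * u (n + 1) - u n) :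
    u (2 * k) = u 0 := by
  have h := DFunLike.congr_fun (simpleReflection_mul_pow_apply M hu k) j
  simpa [hk, hij.symm] using h.symm

theorem simpleReflection_mul_pow_ne_one {i j : B} (hij : i ≠ j) {k : ℕ} (hk : 0 < k)
    (hM : M i j = 0 ∨ k < M i j) : (simpleReflection M i * simpleReflection M j) ^ k ≠ 1 := by
  intro h
  rcases hM with hM | hM
  · have h_lin : ((2 * k : ℕ) : ℝ) = (0 : ℕ) :=
      apply_two_mul_eq_of_simpleReflection_mul_pow_eq_one M hij h (u := fun n => n) fun n => by
        simp [hM]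
        ring
    norm_cast at h_lin
    lia
  · set θ := Real.pi / M i j with hθ
    have h_cos : Real.cos ((2 * k : ℕ) * θ) = Real.cos ((0 : ℕ) * θ) :=
      apply_two_mul_eq_of_simpleReflection_mul_pow_eq_one M hij h
        (u := fun n => Real.cos (n * θ)) fun n => by
          push_cast
          rw [add_mul, add_mul, one_mul, cos_add_two_mul]
    have h_pos : 0 < (2 * k : ℕ) * θ := by
      have : 0 < M i j := by lia
      positivity
    have h_lt : (2 * k : ℕ) * θ < 2 * Real.pi := by
      have : (k : ℝ) / M i j < 1 :=
        (div_lt_one (by exact_mod_cast hk.trans hM)).mpr (by exact_mod_cast hM)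
      calc ((2 * k : ℕ) : ℝ) * θ = k / M i j * (2 * Real.pi) := by rw [hθ]; push_cast; ring
        _ < 2 * Real.pi := mul_lt_of_lt_one_left (by positivity) this
    rw [Nat.cast_zero, zero_mul, Real.cos_zero,
      Real.cos_eq_one_iff_of_lt_of_lt (by linarith [Real.pi_pos]) h_lt] at h_cos
    exact h_pos.ne' h_cos

theorem simple_mul_simple_pow_ne_one {W : Type*} [Group W] {M : CoxeterMatrix B}
    (cs : CoxeterSystem M W) {i j : B} (hij : i ≠ j) {k : ℕ} (hk : 0 < k)
    (hM : M i j = 0 ∨ k < M i j) : (cs.simple i * cs.simple j) ^ k ≠ 1 := by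
  intro h
  apply simpleReflection_mul_pow_ne_one M hij hk hM
  simpa using congrArg (cs.lift ⟨_, isLiftable_simpleReflection M⟩) h

end GeometricRepresentation

section AlternatingWords

variable {B : Type*}

/-- The word of length `m` alternating between `i` and `j` that starts with `i`, whereas
`CoxeterSystem.alternatingWord` prescribes the last letter. -/
def alternatingFrom (i j : B) (m : ℕ) : List B := (alternatingWord j i m).reverse

theorem alternatingFrom_succ (i j : B) (m : ℕ) :
    alternatingFrom i j (m + 1) = i :: alternatingFrom j i m := by
  simp [alternatingFrom, alternatingWord_succ]

@[simp]
theorem length_alternatingFrom (i j : B) (m : ℕ) : (alternatingFrom i j m).length = m := by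
  simp [alternatingFrom]

theorem alternatingFrom_two (i j : B) : alternatingFrom i j 2 = [i, j] := rfl

theorem getElem_alternatingFrom (i j : B) {m k : ℕ} (hk : k < (alternatingFrom i j m).length) :
    (alternatingFrom i j m)[k] = if k % 2 = 0 then i else j := by
  induction m generalizing i j k with
  | zero => simp at hk
  | succ m ih =>
    simp only [alternatingFrom_succ] at hk ⊢
    cases k with
    | zero => simp
    | succ k =>
      rw [List.getElem_cons_succ, ih]
      grind

theorem eq_or_eq_of_mem_alternatingFrom {i j x : B} {m : ℕ} (hx : x ∈ alternatingFrom i j m) :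
    x = i ∨ x = j := by
  obtain ⟨k, hk, rfl⟩ := List.getElem_of_mem hx
  rw [getElem_alternatingFrom]
  grind

theorem isChain_alternatingFrom {r : B → B → Prop} {i j : B} (hij : r i j) (hji : r j i) (m : ℕ) :
    (alternatingFrom i j m).IsChain r := by
  rw [List.isChain_iff_getElem]
  intro k hk
  simp only [getElem_alternatingFrom]
  grind

theorem prod_map_alternatingWord_two_mul {G : Type*} [Monoid G] (f : B → G) (i j : B) (n : ℕ) :
    ((alternatingWord i j (2 * n)).map f).prod = (f i * f j) ^ n := by
  induction n with
  | zero => simp [alternatingWord]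
  | succ n ih => simp [Nat.mul_succ, alternatingWord_succ, ih, pow_succ]

end AlternatingWords

section Exchange

variable {B W : Type*} [Group W] {M : CoxeterMatrix B} (cs : CoxeterSystem M W)

theorem wordProd_alternatingFrom_braid (i j : B) :
    cs.wordProd (alternatingFrom i j (M i j)) = cs.wordProd (alternatingFrom j i (M i j)) := by
  have h := cs.wordProd_braidWord_eq j i
  rw [braidWord, braidWord, M.symmetric j i] at h
  rw [alternatingFrom, alternatingFrom, wordProd_reverse, wordProd_reverse, h]

theorem rightInvSeq_alternatingWord (i j : B) (m : ℕ) :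
    cs.rightInvSeq (alternatingWord i j m) =
      ((List.range m).map fun k => (cs.simple j * cs.simple i) ^ k * cs.simple j).reverse := by
  induction m generalizing i j with
  | zero => simp [alternatingWord]
  | succ m ih =>
    have conj_pow_mul (k : ℕ) :
        cs.simple j * ((cs.simple i * cs.simple j) ^ k * cs.simple i) * cs.simple j =
          (cs.simple j * cs.simple i) ^ (k + 1) * cs.simple j := by
      have h : SemiconjBy (cs.simple j) (cs.simple i * cs.simple j) (cs.simple j * cs.simple i) :=
        (mul_assoc _ _ _).symm
      rw [← mul_assoc, (h.pow_right k).eq, pow_succ]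
      simp only [mul_assoc]
    rw [alternatingWord_succ, rightInvSeq_concat, ih, List.range_succ_eq_map]
    simp [Function.comp_def, conj_pow_mul]

theorem leftInvSeq_alternatingFrom (i j : B) (m : ℕ) :
    cs.leftInvSeq (alternatingFrom i j m) =
      (List.range m).map fun k => (cs.simple i * cs.simple j) ^ k * cs.simple i := by
  rw [alternatingFrom, leftInvSeq_reverse, rightInvSeq_alternatingWord, List.reverse_reverse]

open scoped Classical in
/-- The action of the simple reflection `s i` on `W × ZMod 2`: conjugation on the first factor,
flipping the sign in the second one exactly over the point `s i`. Over reflections `t`, this is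
the action on the roots `±α_t`. -/
noncomputable def signedConj (i : B) : Function.End (W × ZMod 2) :=
  fun p => (cs.simple i * p.1 * cs.simple i, p.2 + if p.1 = cs.simple i then 1 else 0)

open scoped Classical in
theorem prod_map_signedConj_smul (ω : List B) (x : W) (e : ZMod 2) :
    (ω.map (signedConj cs)).prod • (x, e) =
      (cs.wordProd ω * x * (cs.wordProd ω)⁻¹, e + (cs.rightInvSeq ω).count x) := by
  induction ω with
  | nil => simp
  | cons i ω ih =>
    have conj_eq_iff : cs.wordProd ω * x * (cs.wordProd ω)⁻¹ = cs.simple i ↔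
        (cs.wordProd ω)⁻¹ * cs.simple i * cs.wordProd ω = x := by
      rw [mul_inv_eq_iff_eq_mul, ← eq_inv_mul_iff_mul_eq, eq_comm, mul_assoc]
    rw [List.map_cons, List.prod_cons, mul_smul, ih, Function.End.smul_def, signedConj,
      wordProd_cons, rightInvSeq, List.count_cons]
    ext1
    · simp [mul_assoc]
    · simp [conj_eq_iff, add_assoc]

open scoped Classical in
theorem count_rightInvSeq_alternatingWord_two_mul (i j : B) (x : W) :
    ((cs.rightInvSeq (alternatingWord i j (2 * M i j))).count x : ZMod 2) = 0 := by
  rw [rightInvSeq_alternatingWord, List.count_reverse, two_mul, List.range_add, List.map_append,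
    List.map_map, List.count_append]
  simp [Function.comp_def, pow_add, CharTwo.add_self_eq_zero]

theorem isLiftable_signedConj : M.IsLiftable (signedConj cs) := by
  classical
  intro i j
  have wordProd_eq_one : cs.wordProd (alternatingWord i j (2 * M i j)) = 1 := by
    rw [wordProd, prod_map_alternatingWord_two_mul, simple_mul_simple_pow]
  funext ⟨x, e⟩
  change (signedConj cs i * signedConj cs j) ^ M i j • (x, e) = (x, e)
  rw [← prod_map_alternatingWord_two_mul, prod_map_signedConj_smul,
    count_rightInvSeq_alternatingWord_two_mul, wordProd_eq_one]
  simp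

open scoped Classical in
theorem count_leftInvSeq_congr {ω ω' : List B} (h : cs.wordProd ω = cs.wordProd ω') (x : W) :
    ((cs.leftInvSeq ω).count x : ZMod 2) = (cs.leftInvSeq ω').count x := by
  have lift_wordProd (τ : List B) : cs.lift ⟨_, isLiftable_signedConj cs⟩ (cs.wordProd τ) =
      (τ.map (signedConj cs)).prod := by
    rw [wordProd, map_list_prod, List.map_map]
    exact congrArg (fun f => (τ.map f).prod) (funext (cs.lift_apply_simple _))
  have lift_smul (τ : List B) : cs.lift ⟨_, isLiftable_signedConj cs⟩ (cs.wordProd τ)⁻¹ • (x, 0) =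
      ((cs.wordProd τ)⁻¹ * x * cs.wordProd τ, ((cs.leftInvSeq τ).count x : ZMod 2)) := by
    rw [← wordProd_reverse, lift_wordProd, prod_map_signedConj_smul, rightInvSeq_reverse,
      wordProd_reverse]
    simp
  have h_smul := lift_smul ω
  rw [h, lift_smul ω'] at h_smul
  exact (congrArg Prod.snd h_smul).symm

theorem isLeftDescent_wordProd_cons {i : B} {ω : List B} (h : cs.IsReduced (i :: ω)) :
    cs.IsLeftDescent (cs.wordProd (i :: ω)) i := by
  rw [IsLeftDescent, h.eq, wordProd_cons, simple_mul_simple_cancel_left, List.length_cons]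
  exact Nat.lt_succ_of_le (cs.length_wordProd_le ω)

theorem exists_isReduced_cons_of_isLeftDescent {w : W} {i : B} (hi : cs.IsLeftDescent w i) :
    ∃ ω, cs.IsReduced (i :: ω) ∧ cs.wordProd (i :: ω) = w := by
  obtain ⟨ω, hω, h⟩ := cs.exists_isReduced (cs.simple i * w)
  have hw : cs.wordProd (i :: ω) = w := by simp [wordProd_cons, ← h]
  refine ⟨ω, ?_, hw⟩
  rw [CoxeterSystem.IsReduced, hw, List.length_cons, ← hω.eq, ← h]
  exact (cs.isLeftDescent_iff.mp hi).symm

theorem simple_mem_leftInvSeq_of_isLeftDescent {ω : List B} {i : B}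
    (hi : cs.IsLeftDescent (cs.wordProd ω) i) : cs.simple i ∈ cs.leftInvSeq ω := by
  classical
  obtain ⟨ω', hω', h⟩ := exists_isReduced_cons_of_isLeftDescent cs hi
  have h_one : (cs.leftInvSeq (i :: ω')).count (cs.simple i) = 1 :=
    List.count_eq_one_of_mem hω'.nodup_leftInvSeq (by simp [leftInvSeq])
  by_contra h_notMem
  have h_parity := count_leftInvSeq_congr cs h (cs.simple i)
  simp [h_one, List.count_eq_zero_of_not_mem h_notMem] at h_parity

theorem simple_notMem_leftInvSeq_alternatingFrom {i j : B} (hij : i ≠ j) {k : ℕ}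
    (hk : M i j = 0 ∨ k < M i j) : cs.simple i ∉ cs.leftInvSeq (alternatingFrom j i k) := by
  rw [leftInvSeq_alternatingFrom, List.mem_map]
  rintro ⟨n, hn, h⟩
  have hnk : n < k := List.mem_range.mp hn
  refine simple_mul_simple_pow_ne_one cs hij.symm n.succ_pos (by rw [M.symmetric]; lia) ?_
  rw [pow_succ, ← mul_assoc, h, simple_mul_simple_self]

theorem exists_isReduced_alternatingFrom_append {w : W} {i j : B} (hij : i ≠ j)
    (hi : cs.IsLeftDescent w i) (hj : cs.IsLeftDescent w j) {k : ℕ} (hk : M i j = 0 ∨ k ≤ M i j) :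
    ∃ ω, cs.IsReduced (alternatingFrom i j k ++ ω) ∧
      cs.wordProd (alternatingFrom i j k ++ ω) = w := by
  induction k generalizing i j with
  | zero =>
    obtain ⟨ω, hω, rfl⟩ := cs.exists_isReduced w
    exact ⟨ω, hω, rfl⟩
  | succ k ih =>
    obtain ⟨ω, hω, rfl⟩ := ih hij.symm hj hi (by rw [M.symmetric]; lia)
    obtain ⟨n, hn, h_get⟩ := List.getElem_of_mem (simple_mem_leftInvSeq_of_isLeftDescent cs hi)
    -- The letter deleted by the exchange lies beyond the alternating prefix, which does not have
    -- `s i` among its inversions.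
    have hkn : k ≤ n := by
      by_contra! hnk
      apply simple_notMem_leftInvSeq_alternatingFrom cs hij (k := k) (by lia)
      have h_take := cs.leftInvSeq_take (alternatingFrom j i k ++ ω) k
      rw [List.take_left' (length_alternatingFrom j i k)] at h_take
      rw [h_take, ← h_get]
      exact List.mem_take_iff_getElem.mpr ⟨n, by lia, rfl⟩
    have h_erase := cs.getD_leftInvSeq_mul_wordProd (alternatingFrom j i k ++ ω) n
    rw [List.getD_eq_getElem _ _ hn, h_get, List.eraseIdx_append_of_length_le (by simpa using hkn),
      length_alternatingFrom] at h_erase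
    have h_prod : cs.wordProd (alternatingFrom i j (k + 1) ++ ω.eraseIdx (n - k)) =
        cs.wordProd (alternatingFrom j i k ++ ω) := by
      rw [alternatingFrom_succ, List.cons_append, wordProd_cons, ← h_erase,
        simple_mul_simple_cancel_left]
    refine ⟨ω.eraseIdx (n - k), ?_, h_prod⟩
    rw [length_leftInvSeq, List.length_append, length_alternatingFrom] at hn
    rw [CoxeterSystem.IsReduced, h_prod, hω.eq]
    simp only [List.length_append, length_alternatingFrom]
    rw [List.length_eraseIdx_of_lt (by lia)]
    lia

theorem ne_zero_of_isLeftDescent {w : W} {i j : B} (hij : i ≠ j) (hi : cs.IsLeftDescent w i)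
    (hj : cs.IsLeftDescent w j) : M i j ≠ 0 := by
  intro h_zero
  obtain ⟨ω, hω, h⟩ := exists_isReduced_alternatingFrom_append cs hij hi hj
    (k := cs.length w + 1) (.inl h_zero)
  have h_length := hω.eq
  rw [h, List.length_append, length_alternatingFrom] at h_length
  lia

end Exchange

section Matsumoto

variable {B W : Type*} [Group W] {M : CoxeterMatrix B}

/-- A braid move: replacing a factor `i j i ⋯` of length `M i j` by the factor `j i j ⋯` of the same
length. For an infinite bond, encoded by `M i j = 0`, the two words are equal. -/
def BraidStep (M : CoxeterMatrix B) (l l' : List B) : Prop :=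
  ∃ (u v : List B) (i j : B),
    l = u ++ alternatingFrom i j (M i j) ++ v ∧ l' = u ++ alternatingFrom j i (M i j) ++ v

/-- Two words are braid equivalent if they are connected by a sequence of braid moves. -/
def BraidEquiv (M : CoxeterMatrix B) : List B → List B → Prop :=
  Relation.ReflTransGen (BraidStep M)

namespace BraidStep

theorem cons (i : B) {l l' : List B} (h : BraidStep M l l') : BraidStep M (i :: l) (i :: l') := by
  obtain ⟨u, v, a, b, rfl, rfl⟩ := h
  exact ⟨i :: u, v, a, b, rfl, rfl⟩

theorem length_eq {l l' : List B} (h : BraidStep M l l') : l.length = l'.length := by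
  obtain ⟨u, v, i, j, rfl, rfl⟩ := h
  simp

theorem wordProd_eq (cs : CoxeterSystem M W) {l l' : List B} (h : BraidStep M l l') :
    cs.wordProd l = cs.wordProd l' := by
  obtain ⟨u, v, i, j, rfl, rfl⟩ := h
  simp only [wordProd_append, wordProd_alternatingFrom_braid cs i j]

theorem isReduced_iff (cs : CoxeterSystem M W) {l l' : List B} (h : BraidStep M l l') :
    cs.IsReduced l ↔ cs.IsReduced l' := by
  rw [CoxeterSystem.IsReduced, CoxeterSystem.IsReduced, h.wordProd_eq cs, h.length_eq]

end BraidStep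

theorem BraidEquiv.cons (i : B) {l l' : List B} (h : BraidEquiv M l l') :
    BraidEquiv M (i :: l) (i :: l') :=
  Relation.ReflTransGen.lift (i :: ·) (fun _ _ => BraidStep.cons i) _ _ h

theorem exists_braidStep_of_isLeftDescent (cs : CoxeterSystem M W) {w : W} {i j : B} (hij : i ≠ j)
    (hi : cs.IsLeftDescent w i) (hj : cs.IsLeftDescent w j) :
    ∃ τ τ', cs.IsReduced (i :: τ) ∧ cs.wordProd (i :: τ) = w ∧ BraidStep M (i :: τ) (j :: τ') := by
  obtain ⟨m, hm⟩ := Nat.exists_eq_add_one_of_ne_zero (ne_zero_of_isLeftDescent cs hij hi hj)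
  obtain ⟨v, hv, h_prod⟩ := exists_isReduced_alternatingFrom_append cs hij hi hj (.inr le_rfl)
  have h_step : BraidStep M (alternatingFrom i j (M i j) ++ v) (alternatingFrom j i (M i j) ++ v) :=
    ⟨[], v, i, j, rfl, rfl⟩
  rw [hm, alternatingFrom_succ] at hv h_prod
  rw [hm, alternatingFrom_succ, alternatingFrom_succ] at h_step
  exact ⟨_, _, hv, h_prod, h_step⟩

theorem braidEquiv_of_isReduced (cs : CoxeterSystem M W) {ω ω' : List B} (hω : cs.IsReduced ω)
    (hω' : cs.IsReduced ω') (h : cs.wordProd ω = cs.wordProd ω') : BraidEquiv M ω ω' := by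
  induction hn : cs.length (cs.wordProd ω) generalizing ω ω' with
  | zero =>
    have h_nil : ω = [] := List.length_eq_zero_iff.mp (hω.eq.symm.trans hn)
    have h_nil' : ω' = [] := List.length_eq_zero_iff.mp (hω'.eq.symm.trans (h ▸ hn))
    rw [h_nil, h_nil']
    exact .refl
  | succ n ih =>
    have of_cons_cons {k : B} {τ τ' : List B} (hτ : cs.IsReduced (k :: τ))
        (hτ' : cs.IsReduced (k :: τ')) (h : cs.wordProd (k :: τ) = cs.wordProd (k :: τ'))
        (hn : cs.length (cs.wordProd (k :: τ)) = n + 1) : BraidEquiv M (k :: τ) (k :: τ') := by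
      refine (ih (hτ.drop 1) (hτ'.drop 1) (by simpa [wordProd_cons] using h) ?_).cons k
      rw [(hτ.drop 1).eq]
      exact Nat.succ_injective (hτ.eq.symm.trans hn)
    obtain ⟨i, ω, rfl⟩ := List.exists_cons_of_length_eq_add_one (hω.eq.symm.trans hn)
    obtain ⟨j, ω', rfl⟩ := List.exists_cons_of_length_eq_add_one (hω'.eq.symm.trans (h ▸ hn))
    obtain rfl | hij := eq_or_ne i j
    · exact of_cons_cons hω hω' h hn
    obtain ⟨τ, τ', hτ, h_prod, h_step⟩ := exists_braidStep_of_isLeftDescent cs hij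
      (isLeftDescent_wordProd_cons cs hω) (h ▸ isLeftDescent_wordProd_cons cs hω')
    have hτ' := (h_step.isReduced_iff cs).mp hτ
    have h_prod' := (h_step.wordProd_eq cs).symm.trans h_prod
    exact ((of_cons_cons hω hτ h_prod.symm hn).tail h_step).trans
      (of_cons_cons hτ' hω' (h_prod'.trans h) (h_prod' ▸ hn))

end Matsumoto

section CommutationClasses

variable {B W : Type*} [Group W] {M : CoxeterMatrix B}

theorem CommStep.symm {l l' : List B} (h : CommStep M l l') : CommStep M l' l := by
  obtain ⟨u, v, a, b, hab, rfl, rfl⟩ := h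
  exact ⟨u, v, b, a, by rw [M.symmetric, hab], rfl, rfl⟩

theorem CommStep.append (w w' : List B) {l l' : List B} (h : CommStep M l l') :
    CommStep M (w ++ l ++ w') (w ++ l' ++ w') := by
  obtain ⟨u, v, a, b, hab, rfl, rfl⟩ := h
  exact ⟨w ++ u, v ++ w', a, b, hab, by simp, by simp⟩

theorem CommStep.braidStep {l l' : List B} (h : CommStep M l l') : BraidStep M l l' := by
  obtain ⟨u, v, a, b, hab, rfl, rfl⟩ := h
  exact ⟨u, v, a, b, by simp [hab, alternatingFrom_two], by simp [hab, alternatingFrom_two]⟩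

namespace CommEquiv

theorem refl (l : List B) : CommEquiv M l l := Relation.ReflTransGen.refl

theorem trans {l₁ l₂ l₃ : List B} (h : CommEquiv M l₁ l₂) (h' : CommEquiv M l₂ l₃) :
    CommEquiv M l₁ l₃ := Relation.ReflTransGen.trans h h'

theorem symm {l l' : List B} (h : CommEquiv M l l') : CommEquiv M l' l := by
  induction h with
  | refl => exact refl _
  | tail _ h ih => exact ih.head h.symm

theorem of_commStep {l l' : List B} (h : CommStep M l l') : CommEquiv M l l' :=
  Relation.ReflTransGen.single (Or.inl h)

theorem append (w w' : List B) {l l' : List B} (h : CommEquiv M l l') :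
    CommEquiv M (w ++ l ++ w') (w ++ l' ++ w') :=
  Relation.ReflTransGen.lift (fun l => w ++ l ++ w')
    (fun _ _ => Or.imp (CommStep.append w w') (CommStep.append w w')) _ _ h

theorem cons (a : B) {l l' : List B} (h : CommEquiv M l l') : CommEquiv M (a :: l) (a :: l') := by
  simpa using h.append [a] []

theorem apply_eq_of_commStep {α : Type*} {f : List B → α}
    (hf : ∀ l l', CommStep M l l' → f l = f l') {l l' : List B} (h : CommEquiv M l l') :
    f l = f l' := by
  induction h with
  | refl => rfl
  | tail _ h ih => exact ih.trans (h.elim (hf _ _) fun h => (hf _ _ h).symm)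

theorem wordProd_eq (cs : CoxeterSystem M W) {l l' : List B} (h : CommEquiv M l l') :
    cs.wordProd l = cs.wordProd l' :=
  h.apply_eq_of_commStep fun _ _ h => h.braidStep.wordProd_eq cs

theorem isReduced_iff (cs : CoxeterSystem M W) {l l' : List B} (h : CommEquiv M l l') :
    cs.IsReduced l ↔ cs.IsReduced l' :=
  (h.apply_eq_of_commStep fun _ _ h => propext (h.braidStep.isReduced_iff cs)).to_iff

open scoped Classical in
theorem filter_eq {a b : B} (hab : M a b ≠ 2) {l l' : List B} (h : CommEquiv M l l') :
    l.filter (fun x => x = a ∨ x = b) = l'.filter (fun x => x = a ∨ x = b) := by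
  refine h.apply_eq_of_commStep (f := List.filter fun x => x = a ∨ x = b) ?_
  rintro _ _ ⟨u, v, x, y, hxy, rfl, rfl⟩
  have hba := M.symmetric a b
  by_cases hx : x = a ∨ x = b <;> by_cases hy : y = a ∨ y = b <;> simp [hx, hy]
  grind

theorem cons_append_comm {b : B} {l : List B} (h : ∀ x ∈ l, M b x = 2) (l' : List B) :
    CommEquiv M (b :: (l ++ l')) (l ++ b :: l') := by
  induction l with
  | nil => exact refl _
  | cons a l ih =>
    rw [List.forall_mem_cons] at h
    have h_swap : CommStep M (b :: a :: (l ++ l')) (a :: b :: (l ++ l')) :=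
      ⟨[], l ++ l', b, a, h.1, rfl, rfl⟩
    exact (of_commStep h_swap).trans ((ih h.2).cons a)

theorem map_partition {ι : Type*} (f : ι → B) (p : ι → Prop) [DecidablePred p] {l : List ι}
    (h : l.Pairwise fun x y => ¬ p x → p y → M (f x) (f y) = 2) :
    CommEquiv M (l.map f) ((l.filter p).map f ++ (l.filter (¬ p ·)).map f) := by
  induction l with
  | nil => exact refl _
  | cons x l ih =>
    rw [List.pairwise_cons] at h
    have h_tail := (ih h.2).cons (f x)
    by_cases hx : p x
    · simpa [hx] using h_tail
    · have h_comm : ∀ b ∈ (l.filter p).map f, M (f x) b = 2 := by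
        simp only [List.forall_mem_map, List.mem_filter, decide_eq_true_eq]
        exact fun y hy => h.1 y hy.1 hx hy.2
      simpa [hx] using h_tail.trans (cons_append_comm h_comm _)

end CommEquiv

/-- `l` is a factor, i.e. a contiguous subword, of some word in the commutation class of `ω`. -/
def CommFactor (M : CoxeterMatrix B) (l ω : List B) : Prop :=
  ∃ u v, CommEquiv M ω (u ++ l ++ v)

theorem CommFactor.cons (a : B) {l ω : List B} (h : CommFactor M l ω) :
    CommFactor M l (a :: ω) := by
  obtain ⟨u, v, h⟩ := h
  exact ⟨a :: u, v, h.cons a⟩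

end CommutationClasses

section Heaps

variable {B : Type*} {M : CoxeterMatrix B} {ω : List B}

theorem heapLe.le {i j : Fin ω.length} (h : heapLe M ω i j) : i ≤ j := by
  induction h with
  | refl => exact le_rfl
  | tail _ h ih => exact ih.trans (Fin.le_def.mpr h.1.le)

namespace heapLt

theorem lt {i j : Fin ω.length} (h : heapLt M ω i j) : i < j :=
  lt_of_le_of_ne h.1.le h.2

theorem of_lt {i j : Fin ω.length} (hij : i < j) (hM : M (ω.get i) (ω.get j) ≠ 2) :
    heapLt M ω i j :=
  ⟨.single ⟨hij, hM⟩, hij.ne⟩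

theorem trans {i j k : Fin ω.length} (h : heapLt M ω i j) (h' : heapLt M ω j k) :
    heapLt M ω i k :=
  ⟨h.1.trans h'.1, (h.lt.trans h'.lt).ne⟩

end heapLt

/-- The chains `i₁ < ⋯ < i_m` of the heap of `ω` that are convex: they contain every element lying
between two of their members. -/
def IsConvexChain (M : CoxeterMatrix B) (ω : List B) (c : List (Fin ω.length)) : Prop :=
  c.Pairwise (heapLt M ω) ∧
    ∀ i ∈ c, ∀ j ∈ c, ∀ k, heapLe M ω i k → heapLe M ω k j → k ∈ c

theorem isConvexChain_pair_iff {i j : Fin ω.length} :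
    IsConvexChain M ω [i, j] ↔ HeapCovers M ω i j := by
  rw [IsConvexChain, HeapCovers, List.pairwise_pair]
  refine and_congr_right fun hij => ⟨fun h k hik hkj => ?_, fun h x hx y hy k hxk hky => ?_⟩
  · have hk := h i (by simp) j (by simp) k hik.1 hkj.1
    grind [hik.2, hkj.2]
  · have hik : heapLe M ω i k := by
      obtain rfl | rfl := List.mem_pair.mp hx
      exacts [hxk, hij.1.trans hxk]
    have hkj : heapLe M ω k j := by
      obtain rfl | rfl := List.mem_pair.mp hy
      exacts [hky.trans hij.1, hky]
    by_contra hk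
    rw [List.mem_pair, not_or] at hk
    exact h k ⟨hik, Ne.symm hk.1⟩ ⟨hkj, hk.2⟩

/-- The linear extensions of the heap of `ω`, as lists of its elements. It is enough to compare
positions with noncommuting letters, since these generate the order. -/
def IsLinearExtension (M : CoxeterMatrix B) (ω : List B) (l : List (Fin ω.length)) : Prop :=
  l.Perm (List.finRange ω.length) ∧ l.Pairwise fun i j => j < i → M (ω.get i) (ω.get j) = 2

namespace IsLinearExtension

theorem mem {l : List (Fin ω.length)} (h : IsLinearExtension M ω l) (i : Fin ω.length) : i ∈ l :=
  h.1.mem_iff.mpr (List.mem_finRange i)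

theorem nodup {l : List (Fin ω.length)} (h : IsLinearExtension M ω l) : l.Nodup :=
  h.1.nodup_iff.mpr (List.nodup_finRange _)

theorem mem_right_of_heapLe {l₁ l₂ : List (Fin ω.length)} (h : IsLinearExtension M ω (l₁ ++ l₂))
    {i j : Fin ω.length} (hi : i ∈ l₂) (hij : heapLe M ω i j) : j ∈ l₂ := by
  induction hij with
  | refl => exact hi
  | @tail k j _ hkj hk =>
    refine (List.mem_append.mp (h.mem j)).resolve_left fun hj => hkj.2 ?_
    rw [M.symmetric]
    exact (List.pairwise_append.mp h.2).2.2 j hj k hk hkj.1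

theorem mem_left_of_heapLe {l₁ l₂ : List (Fin ω.length)} (h : IsLinearExtension M ω (l₁ ++ l₂))
    {i j : Fin ω.length} (hj : j ∈ l₁) (hij : heapLe M ω i j) : i ∈ l₁ :=
  (List.mem_append.mp (h.mem i)).resolve_right fun hi =>
    h.nodup.disjoint hj (h.mem_right_of_heapLe hi hij)

theorem isConvexChain {l₁ l₂ l₃ : List (Fin ω.length)} (h : IsLinearExtension M ω (l₁ ++ l₂ ++ l₃))
    (hc : (l₂.map ω.get).IsChain fun a b => M a b ≠ 2) : IsConvexChain M ω l₂ := by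
  constructor
  · have : IsTrans (Fin ω.length) (heapLt M ω) := ⟨fun _ _ _ => heapLt.trans⟩
    rw [← List.isChain_iff_pairwise, List.isChain_iff_getElem]
    intro n hn
    have hM : M (ω.get l₂[n]) (ω.get l₂[n + 1]) ≠ 2 :=
      ((List.isChain_map ω.get).mp hc).getElem n hn
    have h_middle : l₂ <:+: l₁ ++ l₂ ++ l₃ := ⟨l₁, l₃, rfl⟩
    have h_pairwise := (h.nodup.sublist h_middle.sublist).and (h.2.sublist h_middle.sublist)
    obtain ⟨h_ne, h_comm⟩ := h_pairwise.isChain.getElem n hn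
    exact .of_lt (lt_of_le_of_ne (not_lt.mp fun h_gt => hM (h_comm h_gt)) h_ne) hM
  · intro i hi j hj k hik hkj
    have hk_left : k ∈ l₁ ++ l₂ := h.mem_left_of_heapLe (List.mem_append_right _ hj) hkj
    rw [List.append_assoc] at h
    have hk_right : k ∈ l₂ ++ l₃ := h.mem_right_of_heapLe (List.mem_append_left _ hi) hik
    exact (List.mem_append.mp hk_left).resolve_left fun hk => h.nodup.disjoint hk hk_right

end IsLinearExtension

theorem CommEquiv.exists_isLinearExtension {ω' : List B} (h : CommEquiv M ω ω') :
    ∃ l, IsLinearExtension M ω l ∧ l.map ω.get = ω' := by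
  induction h with
  | refl =>
    refine ⟨List.finRange ω.length, ⟨.refl _, ?_⟩, by simp⟩
    exact (List.pairwise_lt_finRange _).imp fun hij hji => absurd hij hji.not_gt
  | tail _ h ih =>
    obtain ⟨l, ⟨h_perm, h_pairwise⟩, rfl⟩ := ih
    obtain ⟨u, v, a, b, hab, h_map, rfl⟩ := h.elim id CommStep.symm
    obtain ⟨u, w, rfl, rfl, hw⟩ := List.map_eq_append_iff.mp h_map
    obtain ⟨i, w, rfl, rfl, hw'⟩ := List.map_eq_cons_iff.mp hw
    obtain ⟨j, v, rfl, rfl, rfl⟩ := List.map_eq_cons_iff.mp hw'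
    refine ⟨u ++ j :: i :: v, ⟨((List.Perm.swap i j v).append_left u).trans h_perm, ?_⟩, by simp⟩
    rw [M.symmetric] at hab
    simp only [List.pairwise_append, List.pairwise_cons, List.forall_mem_cons] at h_pairwise ⊢
    grind

theorem commFactor_map_filter_of_convex (p : Fin ω.length → Prop) [DecidablePred p]
    (hp : ∀ i j k, p i → p j → heapLe M ω i k → heapLe M ω k j → p k) :
    CommFactor M (((List.finRange ω.length).filter p).map ω.get) ω := by
  classical
  -- Commute the lower set generated by `p` to the front, then `p` itself to the end of that set.
  let below (i : Fin ω.length) : Prop := ∃ j, p j ∧ heapLe M ω i j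
  have below_of_below {i j : Fin ω.length} (hij : i < j) (hM : M (ω.get i) (ω.get j) ≠ 2)
      (hj : below j) : below i :=
    hj.imp fun k hk => ⟨hk.1, hk.2.head ⟨hij, hM⟩⟩
  have h_below := CommEquiv.map_partition (M := M) ω.get below (l := List.finRange ω.length) <|
    (List.pairwise_lt_finRange _).imp fun hij hi hj =>
      not_not.mp fun hM => hi (below_of_below hij hM hj)
  have h_p := CommEquiv.map_partition (M := M) ω.get (¬ p ·)
    (l := (List.finRange ω.length).filter below) <| by
      refine ((List.pairwise_lt_finRange _).filter _).imp_of_mem fun {i j} _ hj_mem hij hi hj => ?_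
      obtain ⟨k, hk, hjk⟩ : below j := of_decide_eq_true (List.mem_filter.mp hj_mem).2
      by_contra hM
      exact hj (hp i k j (not_not.mp hi) hk (.single ⟨hij, hM⟩) hjk)
  have h_filter : ((List.finRange ω.length).filter below).filter (¬ ¬ p ·) =
      (List.finRange ω.length).filter p := by
    have below_of_p (i : Fin ω.length) (hi : p i) : below i := ⟨i, hi, .refl⟩
    rw [List.filter_filter]
    exact List.filter_congr fun i _ => by simpa using below_of_p i
  rw [h_filter] at h_p
  rw [List.map_get_finRange] at h_below
  exact ⟨_, _, h_below.trans (h_p.append [] _)⟩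

theorem IsConvexChain.commFactor {c : List (Fin ω.length)} (hc : IsConvexChain M ω c) :
    CommFactor M (c.map ω.get) ω := by
  have h_filter : (List.finRange ω.length).filter (· ∈ c) = c :=
    List.Pairwise.eq_of_mem_iff (r := (· < ·)) ((List.pairwise_lt_finRange _).filter _)
      (hc.1.imp heapLt.lt) (by simp)
  have h := commFactor_map_filter_of_convex (M := M) (· ∈ c) fun i j k hi hj => hc.2 i hi j hj k
  rwa [h_filter] at h

theorem commFactor_iff_exists_isConvexChain {l : List B} (hl : l.IsChain fun a b => M a b ≠ 2) :
    CommFactor M l ω ↔ ∃ c, IsConvexChain M ω c ∧ c.map ω.get = l := by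
  constructor
  · rintro ⟨u, v, h⟩
    obtain ⟨L, hL, h_map⟩ := h.exists_isLinearExtension
    obtain ⟨l', l₂, rfl, h_map', rfl⟩ := List.map_eq_append_iff.mp h_map
    obtain ⟨l₁, c, rfl, rfl, rfl⟩ := List.map_eq_append_iff.mp h_map'
    exact ⟨c, hL.isConvexChain hl, rfl⟩
  · rintro ⟨c, hc, rfl⟩
    exact hc.commFactor

theorem commFactor_pair_iff {a b : B} (hab : M a b ≠ 2) :
    CommFactor M [a, b] ω ↔ ∃ i j, HeapCovers M ω i j ∧ ω.get i = a ∧ ω.get j = b := by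
  rw [commFactor_iff_exists_isConvexChain (List.isChain_pair.mpr hab)]
  constructor
  · rintro ⟨c, hc, h_map⟩
    obtain ⟨i, j, rfl⟩ := List.length_eq_two.mp
      (show c.length = 2 by simpa using congrArg List.length h_map)
    simp only [List.map_cons, List.map_nil, List.cons.injEq, and_true] at h_map
    exact ⟨i, j, isConvexChain_pair_iff.mp hc, h_map⟩
  · rintro ⟨i, j, hij, rfl, rfl⟩
    exact ⟨[i, j], isConvexChain_pair_iff.mpr hij, rfl⟩

theorem commFactor_alternatingFrom_iff {a b : B} (hab : M a b ≠ 2) (m : ℕ) :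
    CommFactor M (alternatingFrom a b m) ω ↔ ∃ c : Fin m → Fin ω.length,
      (∀ p q, p < q → heapLt M ω (c p) (c q)) ∧
      (∀ p : Fin m, ω.get (c p) = if (p : ℕ) % 2 = 0 then a else b) ∧
      (∀ (p q : Fin m) (k : Fin ω.length),
        heapLe M ω (c p) k → heapLe M ω k (c q) → ∃ r, c r = k) := by
  have h_chain := isChain_alternatingFrom (r := fun a b => M a b ≠ 2) hab
    (by rwa [M.symmetric]) m
  rw [commFactor_iff_exists_isConvexChain h_chain]
  constructor
  · rintro ⟨c, ⟨h_lt, h_convex⟩, h_map⟩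
    obtain rfl : c.length = m := by simpa using congrArg List.length h_map
    refine ⟨c.get, List.pairwise_iff_get.mp h_lt, fun p => ?_, fun p q k hpk hkq => ?_⟩
    · rw [← getElem_alternatingFrom a b (m := c.length) (by simp)]
      simp [← h_map]
    · exact List.mem_iff_get.mp (h_convex _ (c.get_mem p) _ (c.get_mem q) k hpk hkq)
  · rintro ⟨c, h_lt, h_label, h_convex⟩
    refine ⟨List.ofFn c, ⟨List.pairwise_ofFn.mpr h_lt, ?_⟩, ?_⟩
    · simp only [List.mem_ofFn]
      rintro _ ⟨p, rfl⟩ _ ⟨q, rfl⟩ k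
      exact h_convex p q k
    · refine List.ext_getElem (by simp) fun k hk _ => ?_
      rw [getElem_alternatingFrom]
      simpa using h_label ⟨k, by simpa using hk⟩

end Heaps

section FullCommutativity

variable {B W : Type*} [Group W] {M : CoxeterMatrix B} {ω : List B}

/-- The words whose commutation class contains no word with a factor `a a` or a factor `a b a ⋯` of
length `M a b ≥ 3`. -/
def IsBraidAvoiding (M : CoxeterMatrix B) (ω : List B) : Prop :=
  (∀ a, ¬ CommFactor M [a, a] ω) ∧
    ∀ a b, 3 ≤ M a b → ¬ CommFactor M (alternatingFrom a b (M a b)) ω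

namespace IsBraidAvoiding

theorem of_cons {a : B} (hω : IsBraidAvoiding M (a :: ω)) : IsBraidAvoiding M ω :=
  ⟨fun b h => hω.1 b (h.cons a), fun b c hbc h => hω.2 b c hbc (h.cons a)⟩

theorem commEquiv_of_braidEquiv (hω : IsBraidAvoiding M ω) {ω' : List B} (h : BraidEquiv M ω ω') :
    CommEquiv M ω ω' := by
  induction h with
  | refl => exact .refl _
  | tail _ h_step ih =>
    obtain ⟨u, v, i, j, rfl, rfl⟩ := h_step
    obtain hM | hM | hM | hM : M i j = 0 ∨ M i j = 1 ∨ M i j = 2 ∨ 3 ≤ M i j := by lia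
    · rwa [hM] at ih ⊢
    · have hij : i = j := not_imp_not.mp (M.off_diagonal i j) hM
      rwa [hij] at ih ⊢
    · have h_comm : CommStep M (u ++ [i, j] ++ v) (u ++ [j, i] ++ v) :=
        ⟨u, v, i, j, hM, by simp, by simp⟩
      rw [hM, alternatingFrom_two] at ih ⊢
      exact ih.trans (.of_commStep h_comm)
    · exact absurd ⟨u, v, ih⟩ (hω.2 i j hM)

theorem commEquiv_of_wordProd_eq (cs : CoxeterSystem M W) (h_avoid : IsBraidAvoiding M ω)
    (hω : cs.IsReduced ω) {ω' : List B} (hω' : cs.IsReduced ω')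
    (h : cs.wordProd ω = cs.wordProd ω') : CommEquiv M ω ω' :=
  h_avoid.commEquiv_of_braidEquiv (braidEquiv_of_isReduced cs hω hω' h)

theorem isReduced (cs : CoxeterSystem M W) (h : IsBraidAvoiding M ω) : cs.IsReduced ω := by
  induction ω with
  | nil => simp [CoxeterSystem.IsReduced]
  | cons i ω ih =>
    have hω := ih h.of_cons
    have hi : ¬ cs.IsLeftDescent (cs.wordProd ω) i := fun hi => by
      obtain ⟨ω', hω', h_prod⟩ := exists_isReduced_cons_of_isLeftDescent cs hi
      exact h.1 i ⟨[], ω', (h.of_cons.commEquiv_of_wordProd_eq cs hω hω' h_prod.symm).cons i⟩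
    rw [CoxeterSystem.IsReduced, wordProd_cons, List.length_cons, ← hω.eq]
    exact cs.not_isLeftDescent_iff.mp hi

end IsBraidAvoiding

theorem not_isReduced_append_pair_append (cs : CoxeterSystem M W) (u v : List B) (a : B) :
    ¬ cs.IsReduced (u ++ [a, a] ++ v) := by
  intro h
  have h_prod : cs.wordProd (u ++ [a, a] ++ v) = cs.wordProd (u ++ v) := by
    simp [wordProd_append, wordProd_cons]
  have h_length := cs.length_wordProd_le (u ++ v)
  rw [← h_prod, h.eq] at h_length
  simp at h_length

theorem not_commEquiv_alternatingFrom {a b : B} (hab : a ≠ b) (hM : M a b ≠ 2) {m : ℕ}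
    (hm : m ≠ 0) (u v : List B) :
    ¬ CommEquiv M (u ++ alternatingFrom a b m ++ v) (u ++ alternatingFrom b a m ++ v) := by
  classical
  intro h
  have filter_alternatingFrom {i j : B} (hi : i = a ∨ i = b) (hj : j = a ∨ j = b) :
      (alternatingFrom i j m).filter (fun x => x = a ∨ x = b) = alternatingFrom i j m := by
    refine List.filter_eq_self.mpr fun x hx => decide_eq_true ?_
    obtain rfl | rfl := eq_or_eq_of_mem_alternatingFrom hx <;> assumption
  have h_filter := h.filter_eq hM
  rw [List.filter_append, List.filter_append, List.filter_append, List.filter_append,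
    filter_alternatingFrom (.inl rfl) (.inr rfl), filter_alternatingFrom (.inr rfl) (.inl rfl),
    List.append_cancel_right_eq, List.append_cancel_left_eq] at h_filter
  obtain ⟨m, rfl⟩ := Nat.exists_eq_add_one_of_ne_zero hm
  rw [alternatingFrom_succ, alternatingFrom_succ] at h_filter
  exact hab (List.head_eq_of_cons_eq h_filter)

theorem isBraidAvoiding_of_fullyCommutative (cs : CoxeterSystem M W) (hω : cs.IsReduced ω)
    (h_fc : FullyCommutative cs (cs.wordProd ω)) : IsBraidAvoiding M ω := by
  constructor
  · rintro a ⟨u, v, h⟩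
    exact not_isReduced_append_pair_append cs u v a ((h.isReduced_iff cs).mp hω)
  · rintro a b hab ⟨u, v, h⟩
    have h_step : BraidStep M (u ++ alternatingFrom a b (M a b) ++ v)
        (u ++ alternatingFrom b a (M a b) ++ v) := ⟨u, v, a, b, rfl, rfl⟩
    have h_reduced := (h_step.isReduced_iff cs).mp ((h.isReduced_iff cs).mp hω)
    have h_prod := (h.wordProd_eq cs).trans (h_step.wordProd_eq cs)
    have h_ne : a ≠ b := by
      rintro rfl
      simp at hab
    refine not_commEquiv_alternatingFrom (M := M) (m := M a b) h_ne (by lia) (by lia) u v ?_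
    exact h.symm.trans (h_fc _ _ hω rfl h_reduced h_prod.symm)

theorem isBraidAvoiding_iff (cs : CoxeterSystem M W) :
    IsBraidAvoiding M ω ↔ cs.IsReduced ω ∧ FullyCommutative cs (cs.wordProd ω) := by
  refine ⟨fun h => ?_, fun h => isBraidAvoiding_of_fullyCommutative cs h.1 h.2⟩
  have hω := h.isReduced cs
  refine ⟨hω, fun l l' hl hlw hl' hlw' => ?_⟩
  exact (h.commEquiv_of_wordProd_eq cs hω hl hlw.symm).symm.trans
    (h.commEquiv_of_wordProd_eq cs hω hl' hlw'.symm)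

end FullCommutativity

/-- Stembridge's criterion: the heap of a word `ω` is the heap of a fully
commutative element (equivalently, `ω` is a reduced word of a fully commutative element)
iff (1) no covering relation joins two positions with the same label, and (2) there is
no convex chain of `m(a,b)` positions with labels alternating `a, b, a, b, …` where
`m(a,b) ≥ 3`. -/
theorem stmt7 {B W : Type*} [Group W] {M : CoxeterMatrix B} (cs : CoxeterSystem M W)
    (ω : List B) :
    (cs.IsReduced ω ∧ FullyCommutative cs (cs.wordProd ω)) ↔
      ((∀ i j, HeapCovers M ω i j → ω.get i ≠ ω.get j) ∧
        ¬ ∃ (a b : B) (c : Fin (M a b) → Fin ω.length), 3 ≤ M a b ∧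
          (∀ p q, p < q → heapLt M ω (c p) (c q)) ∧
          (∀ p : Fin (M a b), ω.get (c p) = if (p : ℕ) % 2 = 0 then a else b) ∧
          (∀ (p q : Fin (M a b)) (k : Fin ω.length),
            heapLe M ω (c p) k → heapLe M ω k (c q) → ∃ r, c r = k)) := by
  rw [← isBraidAvoiding_iff cs, IsBraidAvoiding]
  refine and_congr ⟨fun h i j hij h_label => ?_, fun h a h_factor => ?_⟩
    ⟨?_, fun h a b hab h_factor => ?_⟩
  · exact h _ ((commFactor_pair_iff (by simp)).mpr ⟨i, j, hij, rfl, h_label.symm⟩)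
  · obtain ⟨i, j, hij, hi, hj⟩ := (commFactor_pair_iff (by simp)).mp h_factor
    exact h i j hij (hi.trans hj.symm)
  · rintro h ⟨a, b, c, hab, hc⟩
    exact h a b hab ((commFactor_alternatingFrom_iff (by lia) _).mpr ⟨c, hc⟩)
  · obtain ⟨c, hc⟩ := (commFactor_alternatingFrom_iff (by lia) _).mp h_factor
    exact h ⟨a, b, c, hab, hc⟩
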